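/- Let p be a prime, s a positive integer, q = p^s, n ≥ 2, and m = (n-1)q + 1. Then there exists an injective group homomorphism φ from UT_n(F_p) into UT_m(F_p) such that every element of UT_n(F_p) has a q-th root in UT_m(F_p) with respect to φ; that is, for every a ∈ UT_n(F_p) there exists x ∈ UT_m(F_p) with x^q = φ(a). -/

import Mathlib

open Matrix

/-- An `n × n` matrix is *unitriangular* if it is upper triangular with all
diagonal entries equal to `1`. -/
def IsUnitriangular {n : ℕ} {R : Type*} [CommRing R]
    (M : Matrix (Fin n) (Fin n) R) : Prop :=
  M.BlockTriangular id ∧ ∀ i, M i i = 1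

lemma isUnitriangular_one {n : ℕ} {R : Type*} [CommRing R] :
    IsUnitriangular (1 : Matrix (Fin n) (Fin n) R) :=
  ⟨blockTriangular_one, fun i => by simp⟩

lemma IsUnitriangular.mul {n : ℕ} {R : Type*} [CommRing R]
    {A B : Matrix (Fin n) (Fin n) R} (hA : IsUnitriangular A)
    (hB : IsUnitriangular B) : IsUnitriangular (A * B) := by
  refine ⟨hA.1.mul hB.1, fun i => ?_⟩
  rw [mul_apply, Finset.sum_eq_single i]
  · rw [hA.2, hB.2, one_mul]
  · intro j _ hj
    rcases lt_or_gt_of_ne hj with h | h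
    · rw [hA.1 (show id j < id i from h), zero_mul]
    · rw [hB.1 (show id i < id j from h), mul_zero]
  · intro h; exact absurd (Finset.mem_univ i) h

/-- The group `UT_n(F_p)` of upper unitriangular `n × n` matrices over the field
`F_p = ZMod p`, realized as a subgroup of the group of units of the matrix ring. -/
def UT (p n : ℕ) [Fact p.Prime] : Subgroup (Matrix (Fin n) (Fin n) (ZMod p))ˣ where
  carrier := {M | IsUnitriangular (M : Matrix (Fin n) (Fin n) (ZMod p))}
  one_mem' := isUnitriangular_one
  mul_mem' := fun ha hb => ha.mul hb
  inv_mem' := by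
    intro x hx
    have hpow : ∀ k : ℕ,
        IsUnitriangular ((x ^ k : (Matrix (Fin n) (Fin n) (ZMod p))ˣ) :
          Matrix (Fin n) (Fin n) (ZMod p)) := by
      intro k
      induction k with
      | zero => simpa using isUnitriangular_one
      | succ k ih => rw [pow_succ, Units.val_mul]; exact ih.mul hx
    have hinv : x⁻¹ = x ^ (orderOf x - 1) := by
      refine inv_eq_of_mul_eq_one_right ?_
      rw [← pow_succ', Nat.sub_add_cancel (orderOf_pos x)]
      exact pow_orderOf_eq_one x
    show IsUnitriangular ((x⁻¹ : (Matrix (Fin n) (Fin n) (ZMod p))ˣ) :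
      Matrix (Fin n) (Fin n) (ZMod p))
    rw [hinv]
    exact hpow _

/-!
For `N` in a ring of characteristic `p` and `q = p ^ s`, the `q × q` companion matrix `C` of
`t ^ q - N` satisfies `C ^ q = N`, so by the Frobenius identity `(1 + C) ^ q = 1 + N`, a scalar
matrix. Take `1 + N` to be a unitriangular `n × n` matrix. Listing the `n * q` coordinates by
position in `Fin n` first and by position in the companion block second makes `1 + C`
unitriangular. Restriction to the first `m` coordinates is a homomorphism on unitriangular
matrices, and `m = (n - 1) * q + 1` coordinates suffice to see one coordinate of each of the `n`
blocks, which recovers `1 + N`.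
-/

section UpperTriangular

variable {R : Type*} [NonUnitalNonAssocSemiring R]

lemma mul_apply_self_of_isUpperTriangular {ι : Type*} [Fintype ι] [LinearOrder ι]
    {A B : Matrix ι ι R} (hA : A.IsUpperTriangular) (hB : B.IsUpperTriangular) (i : ι) :
    (A * B) i i = A i i * B i i := by
  rw [mul_apply, Finset.sum_eq_single_of_mem i (Finset.mem_univ i)]
  intro j _ hj
  rcases lt_or_gt_of_ne hj with h | h
  · rw [hA h, zero_mul]
  · rw [hB h, mul_zero]

lemma submatrix_castLE_mul {m n : ℕ} (h : m ≤ n) (A : Matrix (Fin n) (Fin n) R)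
    {B : Matrix (Fin n) (Fin n) R} (hB : B.IsUpperTriangular) :
    (A * B).submatrix (Fin.castLE h) (Fin.castLE h) =
      A.submatrix (Fin.castLE h) (Fin.castLE h) * B.submatrix (Fin.castLE h) (Fin.castLE h) := by
  ext k l
  simp only [submatrix_apply, mul_apply]
  refine (Fintype.sum_of_injective _ (Fin.castLE_injective h) _ _ (fun i hi => ?_)
    fun _ => rfl).symm
  have hl : Fin.castLE h l < i := by
    rw [Fin.range_castLE, Set.mem_ofPred_eq, not_lt] at hi
    exact l.2.trans_le hi
  exact mul_eq_zero_of_right _ (hB hl)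

end UpperTriangular

section UnitriangularGroup

variable {R : Type*} [CommRing R] {m n : ℕ}

lemma IsUnitriangular.isUnit {M : Matrix (Fin n) (Fin n) R} (hM : IsUnitriangular M) :
    IsUnit M := by
  rw [isUnit_iff_isUnit_det, det_of_isUpperTriangular hM.1]
  simp [hM.2]

lemma IsUnitriangular.inv {M : Matrix (Fin n) (Fin n) R} (hM : IsUnitriangular M) :
    IsUnitriangular M⁻¹ := by
  have := hM.isUnit.invertible
  have hinv : M⁻¹.IsUpperTriangular := blockTriangular_inv_of_blockTriangular hM.1
  refine ⟨hinv, fun i => ?_⟩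
  rw [← one_mul (M⁻¹ i i), ← hM.2 i, ← mul_apply_self_of_isUpperTriangular hM.1 hinv,
    mul_inv_of_invertible, one_apply_eq, hM.2]

lemma isUnitriangular_one_add_iff {N : Matrix (Fin n) (Fin n) R} :
    IsUnitriangular (1 + N) ↔ ∀ i j, j ≤ i → N i j = 0 := by
  constructor
  · intro h i j hji
    rcases hji.eq_or_lt with rfl | hlt
    · simpa using h.2 j
    · simpa [one_apply_ne hlt.ne'] using h.1 hlt
  · intro h
    exact ⟨blockTriangular_one.add fun i j hlt => h i j hlt.le, fun i => by simp [h i i le_rfl]⟩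

/-- The group of unitriangular `n × n` matrices over a commutative ring, as a subgroup of the
units of the matrix ring. For `R = ZMod p` it is definitionally `UT p n`. -/
def unitriangularGroup (n : ℕ) (R : Type*) [CommRing R] :
    Subgroup (Matrix (Fin n) (Fin n) R)ˣ where
  carrier := {M | IsUnitriangular (M : Matrix (Fin n) (Fin n) R)}
  one_mem' := isUnitriangular_one
  mul_mem' := fun ha hb => ha.mul hb
  inv_mem' := fun {M} hM => by
    simpa only [Set.mem_ofPred_eq, coe_units_inv] using IsUnitriangular.inv hM

lemma unitriangularGroup_ext {a b : unitriangularGroup n R} (h : a.val.val = b.val.val) : a = b :=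
  Subtype.ext (Units.ext h)

lemma IsUnitriangular.exists_unitriangularGroup {M : Matrix (Fin n) (Fin n) R}
    (hM : IsUnitriangular M) : ∃ a : unitriangularGroup n R, a.val.val = M := by
  obtain ⟨u, rfl⟩ := hM.isUnit
  exact ⟨⟨u, hM⟩, rfl⟩

/-- A homomorphism from a group to matrices with unitriangular values, as a homomorphism to the
unitriangular group. -/
def toUnitriangularGroup {G : Type*} [Group G] (f : G →* Matrix (Fin n) (Fin n) R)
    (hf : ∀ g, IsUnitriangular (f g)) : G →* unitriangularGroup n R :=
  f.toHomUnits.codRestrict _ hf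

/-- Restriction of unitriangular matrices to the first `m` rows and columns. -/
def leadingSubmatrix (h : m ≤ n) : unitriangularGroup n R →* unitriangularGroup m R :=
  toUnitriangularGroup
    { toFun a := a.val.val.submatrix (Fin.castLE h) (Fin.castLE h)
      map_one' := submatrix_one _ (Fin.castLE_injective h)
      map_mul' a b := submatrix_castLE_mul h a.val.val b.2.1 }
    fun a => ⟨fun _ _ hlt => a.2.1 hlt, fun _ => a.2.2 _⟩

lemma leadingSubmatrix_apply (h : m ≤ n) (a : unitriangularGroup n R) (k l : Fin m) :
    (leadingSubmatrix h a).val.val k l = a.val.val (Fin.castLE h k) (Fin.castLE h l) :=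
  rfl

end UnitriangularGroup

section Companion

variable {A : Type*} [Semiring A] {q : ℕ}

/-- The companion matrix of `t ^ q - x`: the superdiagonal shift, with `x` in the lower left
corner. The corner is where `i + 1 = j + q`, which for `i < q` says `i = q - 1` and `j = 0`. -/
def companion (q : ℕ) (x : A) : Matrix (Fin q) (Fin q) A :=
  .of fun i j => if i.val + 1 = j then 1 else if i.val + 1 = j + q then x else 0

lemma companion_mul_apply_of_lt (x : A) (M : Matrix (Fin q) (Fin q) A) {i : Fin q}
    (hi : i.val + 1 < q) (j : Fin q) : (companion q x * M) i j = M ⟨i + 1, hi⟩ j := by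
  rw [mul_apply, Finset.sum_eq_single_of_mem ⟨i + 1, hi⟩ (Finset.mem_univ _)]
  · simp [companion]
  · intro l _ hl
    have hne : i.val + 1 ≠ l := fun h => hl (Fin.ext h.symm)
    have hne' : i.val + 1 ≠ l + q := by omega
    simp [companion, hne, hne']

lemma companion_mul_apply_last (x : A) (M : Matrix (Fin q) (Fin q) A) {i : Fin q}
    (hi : i.val + 1 = q) (j : Fin q) :
    (companion q x * M) i j = x * M ⟨0, i.pos⟩ j := by
  rw [mul_apply, Finset.sum_eq_single_of_mem ⟨0, i.pos⟩ (Finset.mem_univ _)]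
  · simp [companion, hi, i.pos.ne']
  · intro l _ hl
    have hne : q ≠ l := l.2.ne'
    have hne' : l.val ≠ 0 := fun h => hl (Fin.ext h)
    simp [companion, hi, hne, hne']

lemma companion_pow_apply (x : A) {k : ℕ} (hk : k ≤ q) (i j : Fin q) :
    (companion q x ^ k) i j =
      if i.val + k = j then 1 else if i.val + k = j + q then x else 0 := by
  induction k generalizing i with
  | zero =>
    have hne : i.val ≠ j + q := by omega
    simp [one_apply, Fin.ext_iff, hne]
  | succ k ih =>
    rw [pow_succ']
    rcases (show i.val + 1 ≤ q from i.2).lt_or_eq with hi | hi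
    · rw [companion_mul_apply_of_lt x _ hi, ih (by omega)]
      simp only [add_assoc, add_comm 1 k]
    · have hne : k ≠ j + q := by omega
      have hne' : i.val + (k + 1) ≠ j := by omega
      have hiff : i.val + (k + 1) = j + q ↔ k = j := by omega
      rw [companion_mul_apply_last x _ hi, ih (by omega)]
      simp [hne, hne', hiff]

lemma companion_pow_self (x : A) : companion q x ^ q = scalar (Fin q) x := by
  ext i j
  have hne : i.val + q ≠ j := by omega
  simp [companion_pow_apply x le_rfl, diagonal_apply, Fin.ext_iff, hne]

lemma one_add_companion_pow (p s : ℕ) [Fact p.Prime] [CharP A p] (x : A) :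
    (1 + companion (p ^ s) x) ^ p ^ s = scalar (Fin (p ^ s)) (1 + x) := by
  rw [add_pow_char_pow_of_commute _ _ (Commute.one_left _), one_pow, companion_pow_self, map_add,
    map_one]

end Companion

section Interleave

variable {R : Type*} [Semiring R] {n : ℕ} (q : ℕ)

/-- The `q × q` matrices over `n × n` matrices as `(n * q) × (n * q)` matrices. The coordinate
`(j, i)` of `Fin q × Fin n` gets the position `q * i + j`, so that the inner index `i` is the
leading one in the order of `Fin (n * q)`. -/
def interleave :
    Matrix (Fin q) (Fin q) (Matrix (Fin n) (Fin n) R) ≃+* Matrix (Fin (n * q)) (Fin (n * q)) R :=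
  (compRingEquiv (Fin q) (Fin n) R).trans
    (reindexRingEquiv R ((Equiv.prodComm _ _).trans finProdFinEquiv))

lemma interleave_apply (M : Matrix (Fin q) (Fin q) (Matrix (Fin n) (Fin n) R))
    (k l : Fin (n * q)) :
    interleave q M k l = M k.modNat l.modNat k.divNat l.divNat :=
  rfl

lemma interleave_finProdFinEquiv_apply (M : Matrix (Fin q) (Fin q) (Matrix (Fin n) (Fin n) R))
    (x y : Fin n × Fin q) :
    interleave q M (finProdFinEquiv x) (finProdFinEquiv y) = M x.2 y.2 x.1 y.1 := by
  simp [interleave]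

lemma interleave_scalar_apply (a : Matrix (Fin n) (Fin n) R) (k l : Fin (n * q)) :
    interleave q (scalar (Fin q) a) k l =
      if k.modNat = l.modNat then a k.divNat l.divNat else 0 := by
  rw [interleave_apply, scalar_apply, diagonal_apply]
  split_ifs <;> rfl

end Interleave

section Inflation

variable {R : Type*} [CommRing R] {m n : ℕ} (q : ℕ)

lemma isUnitriangular_interleave_scalar {a : Matrix (Fin n) (Fin n) R} (ha : IsUnitriangular a) :
    IsUnitriangular (interleave q (scalar (Fin q) a)) := by
  refine ⟨fun k l hlk => ?_, fun k => by rw [interleave_scalar_apply, if_pos rfl, ha.2]⟩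
  rw [interleave_scalar_apply]
  split_ifs with hmod
  · refine ha.1 (lt_of_le_of_ne (Nat.div_le_div_right (le_of_lt hlk)) fun hdiv => hlk.ne ?_)
    exact finProdFinEquiv.symm.injective (Prod.ext hdiv hmod.symm)
  · rfl

lemma isUnitriangular_interleave_one_add_companion {N : Matrix (Fin n) (Fin n) R}
    (hN : IsUnitriangular (1 + N)) : IsUnitriangular (interleave q (1 + companion q N)) := by
  rw [isUnitriangular_one_add_iff] at hN
  rw [map_add, map_one, isUnitriangular_one_add_iff]
  intro k l hlk
  rw [interleave_apply, companion, of_apply]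
  split_ifs with hsucc
  · refine one_apply_ne fun hdiv => ?_
    have hdiv' : k.val / q = l.val / q := congrArg Fin.val hdiv
    have hsucc' : k.val % q + 1 = l.val % q := hsucc
    have hk := Nat.div_add_mod k.val q
    have hl := Nat.div_add_mod l.val q
    rw [hdiv'] at hk
    omega
  · exact hN _ _ (Nat.div_le_div_right hlk)
  · rfl

/-- The homomorphism `a ↦ a ⊗ 1` of unitriangular groups, in the coordinates of `interleave`. -/
def inflate : unitriangularGroup n R →* unitriangularGroup (n * q) R :=
  toUnitriangularGroup
    { toFun a := interleave q (scalar (Fin q) a.val.val)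
      map_one' := by simp
      map_mul' a b := by rw [Subgroup.coe_mul, Units.val_mul, map_mul, map_mul] }
    fun a => isUnitriangular_interleave_scalar q a.2

lemma coe_inflate (a : unitriangularGroup n R) :
    (inflate q a).val.val = interleave q (scalar (Fin q) a.val.val) :=
  rfl

lemma exists_pow_eq_inflate (p s : ℕ) [Fact p.Prime] [CharP R p] (a : unitriangularGroup n R) :
    ∃ x : unitriangularGroup (n * p ^ s) R, x ^ p ^ s = inflate (p ^ s) a := by
  obtain ⟨N, hN⟩ : ∃ N, a.val.val = 1 + N := ⟨a.val.val - 1, by simp⟩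
  have hN_unitriangular : IsUnitriangular (1 + N) := hN ▸ a.2
  obtain ⟨x, hx⟩ := (isUnitriangular_interleave_one_add_companion (p ^ s)
    hN_unitriangular).exists_unitriangularGroup
  refine ⟨x, unitriangularGroup_ext ?_⟩
  rcases isEmpty_or_nonempty (Fin n) with _ | _
  · have : IsEmpty (Fin (n * p ^ s)) := Function.isEmpty Fin.divNat
    exact Subsingleton.elim _ _
  calc x.val.val ^ p ^ s = interleave (p ^ s) ((1 + companion (p ^ s) N) ^ p ^ s) := by
        rw [hx, map_pow]
    _ = (inflate (p ^ s) a).val.val := by rw [one_add_companion_pow, ← hN, coe_inflate]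

variable {q}

lemma leadingSubmatrix_comp_inflate_injective (h : m ≤ (n + 1) * q) (hm : n * q < m) :
    Function.Injective
      ((leadingSubmatrix h).comp (inflate q : unitriangularGroup (n + 1) R →* _)) := by
  have hq : 0 < q := by lia
  let blockStart (i : Fin (n + 1)) : Fin m := ⟨finProdFinEquiv (i, ⟨0, hq⟩), by
    simp only [finProdFinEquiv_apply_val]
    nlinarith [i.is_le]⟩
  have hcast (i : Fin (n + 1)) : Fin.castLE h (blockStart i) = finProdFinEquiv (i, ⟨0, hq⟩) := rfl
  have hentry (a : unitriangularGroup (n + 1) R) (i j : Fin (n + 1)) :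
      (leadingSubmatrix h (inflate q a)).val.val (blockStart i) (blockStart j) = a.val.val i j := by
    rw [leadingSubmatrix_apply, coe_inflate, hcast, hcast, interleave_finProdFinEquiv_apply,
      scalar_apply, diagonal_apply_eq]
  intro a b hab
  refine unitriangularGroup_ext (Matrix.ext fun i j => ?_)
  rw [← hentry a, ← hentry b]
  exact congrArg (fun u => u.val.val (blockStart i) (blockStart j)) hab

end Inflation

theorem simultaneous_adjunction_of_roots_general (R : Type*) [CommRing R] (p s n : ℕ)
    [Fact p.Prime] [CharP R p] :
    ∃ φ : unitriangularGroup (n + 1) R →* unitriangularGroup (n * p ^ s + 1) R,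
      Function.Injective φ ∧
        ∀ a : unitriangularGroup (n + 1) R,
          ∃ x : unitriangularGroup (n * p ^ s + 1) R, x ^ p ^ s = φ a := by
  have hq : 0 < p ^ s := pow_pos (Fact.out : p.Prime).pos s
  have h : n * p ^ s + 1 ≤ (n + 1) * p ^ s := by rw [add_one_mul]; lia
  refine ⟨(leadingSubmatrix h).comp (inflate (p ^ s)),
    leadingSubmatrix_comp_inflate_injective h (Nat.lt_succ_self _), fun a => ?_⟩
  obtain ⟨x, hx⟩ := exists_pow_eq_inflate p s a
  exact ⟨leadingSubmatrix h x, by rw [← map_pow, hx, MonoidHom.comp_apply]⟩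

/-- Adjunction of `p^s`-th roots: `UT_n(F_p)` embeds in `UT_m(F_p)`, `m = (n-1)p^s + 1`,
so that every element of `UT_n(F_p)` acquires a `p^s`-th root. -/
theorem simultaneous_adjunction_of_roots (p s n : ℕ) [Fact p.Prime]
    (hs : 0 < s) (hn : 2 ≤ n) :
    ∃ φ : UT p n →* UT p ((n - 1) * p ^ s + 1),
      Function.Injective φ ∧
        ∀ a : UT p n, ∃ x : UT p ((n - 1) * p ^ s + 1), x ^ p ^ s = φ a := by
  obtain _ | n := n
  · omega
  · exact simultaneous_adjunction_of_roots_general (ZMod p) p s n
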